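/- For a crossing perfect matching of 2k points with the same index-identification constraints, the number of equivalence classes of the 2k+1 index variables is at most k - 1. -/

import Mathlib

theorem card_classes_crossing_le (k : ℕ)
    (f : Fin (2 * k) → Fin (2 * k))
    (hinv : Function.Involutive f) (hfree : ∀ i, f i ≠ i)
    (hc : ∃ i l : Fin (2 * k),
      (i : ℕ) < (l : ℕ) ∧ (l : ℕ) < (f i : ℕ) ∧ (f i : ℕ) < (f l : ℕ)) :
    Nat.card (Quotient (Relation.EqvGen.setoid
      (fun a b : Fin (2 * k + 1) => ∃ i : Fin (2 * k),
        (a = i.castSucc ∧ b = (f i).succ) ∨ (a = i.succ ∧ b = (f i).castSucc)))) ≤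
      k - 1 := by
  classical
  obtain ⟨i, l, hil, hlf, hff⟩ := hc
  set R : Fin (2 * k + 1) → Fin (2 * k + 1) → Prop := fun a b => ∃ i : Fin (2 * k),
        (a = i.castSucc ∧ b = (f i).succ) ∨ (a = i.succ ∧ b = (f i).castSucc) with hR
  let V := Quotient (Relation.EqvGen.setoid R)
  change Nat.card V ≤ k - 1
  let m : Fin (2 * k + 1) → V := fun a => Quotient.mk _ a
  have h1 : ∀ j, m j.castSucc = m (f j).succ := fun j =>
    Quotient.sound (Relation.EqvGen.rel _ _ ⟨j, Or.inl ⟨rfl, rfl⟩⟩)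
  have h2 : ∀ j, m j.succ = m (f j).castSucc := fun j =>
    Quotient.sound (Relation.EqvGen.rel _ _ ⟨j, Or.inr ⟨rfl, rfl⟩⟩)
  let T : Finset (Fin (2 * k)) := {i, l, f i, f l}
  have hTcard : T.card = 4 := by
    have a1 : i ≠ l := by intro h; rw [h] at hil; omega
    have a2 : i ≠ f i := (hfree i).symm
    have a3 : i ≠ f l := by intro h; rw [← h] at hff; omega
    have a4 : l ≠ f i := by intro h; rw [← h] at hlf; omega
    have a5 : l ≠ f l := (hfree l).symm
    have a6 : f i ≠ f l := by intro h; rw [← h] at hff; omega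
    simp [T, a1, a2, a3, a4, a5, a6]
  have hTf : ∀ j, f j ∈ T → j ∈ T := by
    intro j hj
    have e : ∀ x, f j = x → j = f x := fun x h => by rw [← h, hinv]
    simp only [T, Finset.mem_insert, Finset.mem_singleton] at hj ⊢
    rcases hj with h | h | h | h
    · exact Or.inr (Or.inr (Or.inl (e _ h)))
    · exact Or.inr (Or.inr (Or.inr (e _ h)))
    · exact Or.inl (hinv.injective h)
    · exact Or.inr (Or.inl (hinv.injective h))
  let g : Fin (2 * k) → Sym2 V := fun j => s(m j.castSucc, m j.succ)
  have hg : ∀ j, g (f j) = g j := by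
    intro j
    simp only [g]
    rw [← h1, ← h2, Sym2.eq_swap]
  let S : Finset (Sym2 V) := Tᶜ.image g
  have hTc : Tᶜ.card = 2 * k - 4 := by rw [Finset.card_compl, hTcard]; simp
  have hS : S.card * 2 ≤ Tᶜ.card := by
    rw [Finset.card_eq_sum_card_image g Tᶜ]
    refine Finset.card_nsmul_le_sum S _ 2 ?_
    intro b hb
    obtain ⟨j, hj, rfl⟩ := Finset.mem_image.1 hb
    have hj' : j ∉ T := Finset.mem_compl.1 hj
    have : ({j, f j} : Finset (Fin (2 * k))) ⊆ Tᶜ.filter (fun x => g x = g j) := by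
      intro x hx
      simp only [Finset.mem_insert, Finset.mem_singleton] at hx
      rcases hx with rfl | rfl
      · simp [hj']
      · simp only [Finset.mem_filter, Finset.mem_compl]
        exact ⟨fun h => hj' (hTf _ h), hg j⟩
    calc 2 = ({j, f j} : Finset (Fin (2 * k))).card := (Finset.card_pair (hfree j).symm).symm
      _ ≤ _ := Finset.card_le_card this
  let G : SimpleGraph V := SimpleGraph.fromEdgeSet (S : Set (Sym2 V))
  have hstep : ∀ j, j ∉ T → G.Reachable (m j.castSucc) (m j.succ) := by
    intro j hj
    by_cases he : m j.castSucc = m j.succ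
    · rw [he]
    · apply SimpleGraph.Adj.reachable
      rw [SimpleGraph.fromEdgeSet_adj]
      exact ⟨Finset.mem_coe.2 (Finset.mem_image.2 ⟨j, by simpa using hj, rfl⟩), he⟩
  let q : ℕ → V := fun n => m (Fin.ofNat (2 * k + 1) n)
  have hq1 : ∀ j : Fin (2 * k), q j = m j.castSucc := by
    intro j
    simp only [q]; congr 1; ext; simp
  have hq2 : ∀ j : Fin (2 * k), q (j + 1) = m j.succ := by
    intro j
    simp only [q]; congr 1; ext; simp
  have hseg : ∀ a b : ℕ, a ≤ b → b ≤ 2 * k →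
      (∀ j : Fin (2 * k), a ≤ j → (j : ℕ) < b → j ∉ T) → G.Reachable (q a) (q b) := by
    intro a b hab
    induction b, hab using Nat.le_induction with
    | base => intros; exact SimpleGraph.Reachable.refl _
    | succ b hab ih =>
      intro hb hj
      refine (ih (by omega) fun j x y => hj j x (by omega)).trans ?_
      have := hstep ⟨b, by omega⟩ (hj _ hab (by simp))
      rw [← hq1, ← hq2] at this
      exact this
  have hT : ∀ j : Fin (2 * k), (j : ℕ) ≠ i → (j : ℕ) ≠ l → (j : ℕ) ≠ f i → (j : ℕ) ≠ f l →
      j ∉ T := by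
    intro j b1 b2 b3 b4 h
    simp only [T, Finset.mem_insert, Finset.mem_singleton] at h
    rcases h with h | h | h | h <;> simp [h] at b1 b2 b3 b4
  have hfl := (f l).isLt
  have e1 : q i = q (f i + 1) := by rw [hq1, hq2, h1]
  have e2 : q (i + 1) = q (f i) := by rw [hq1, hq2, h2]
  have e3 : q l = q (f l + 1) := by rw [hq1, hq2, h1]
  have e4 : q (l + 1) = q (f l) := by rw [hq1, hq2, h2]
  have seg : ∀ a b : ℕ, a ≤ b → b ≤ 2 * k →
      (∀ j : ℕ, a ≤ j → j < b → j ≠ i ∧ j ≠ l ∧ j ≠ f i ∧ j ≠ f l) →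
      G.Reachable (q a) (q b) := by
    intro a b hab hb h
    refine hseg a b hab hb fun j x y => ?_
    obtain ⟨b1, b2, b3, b4⟩ := h j x y
    exact hT j b1 b2 b3 b4
  have rD : G.Reachable (q i) (q (f l)) := by
    rw [e1]; exact seg _ _ (by omega) (by omega) (by intros; omega)
  have rC : G.Reachable (q i) (q (f i)) := by
    refine rD.trans ?_
    rw [← e4]; exact seg _ _ (by omega) (by omega) (by intros; omega)
  have rB : G.Reachable (q i) (q l) := by
    refine rC.trans ?_
    rw [← e2]; exact seg _ _ (by omega) (by omega) (by intros; omega)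
  have hall : ∀ n, n ≤ 2 * k → G.Reachable (q i) (q n) := by
    intro n hn
    by_cases c1 : n ≤ i
    · exact (seg n i c1 (by omega) (by intros; omega)).symm
    by_cases c2 : n ≤ l
    · exact rB.trans (seg n l c2 (by omega) (by intros; omega)).symm
    by_cases c3 : n ≤ f i
    · exact rC.trans (seg n (f i) c3 (by omega) (by intros; omega)).symm
    by_cases c4 : n ≤ f l
    · exact rD.trans (seg n (f l) c4 (by omega) (by intros; omega)).symm
    · refine rB.trans ?_
      rw [e3]
      exact seg _ _ (by omega) (by omega) (by intros; omega)
  have hV : ∀ v : V, G.Reachable (q i) v := by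
    intro v
    obtain ⟨a, rfl⟩ := Quotient.exists_rep v
    have := hall a (by omega)
    have e : q a = m a := by simp only [q]; congr 1; ext; simp
    rw [e] at this
    exact this
  have hconn : G.Connected :=
    { preconnected := fun u v => (hV u).symm.trans (hV v), nonempty := ⟨q i⟩ }
  have hfin := hconn.card_vert_le_card_edgeSet_add_one
  have hE : Nat.card G.edgeSet ≤ S.card := by
    have : G.edgeSet ⊆ (S : Set (Sym2 V)) := by
      simp only [G, SimpleGraph.edgeSet_fromEdgeSet]; exact Set.sdiff_subset
    have h := Nat.card_mono S.finite_toSet this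
    simpa using h
  omega
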